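/- Let x = (x_0, x_1, ...) be a nonzero finitely supported element of Ĥ (i.e. x_k = 0 for all but finitely many k). Then the closed disc {λ ∈ ℂ : |λ| ≤ R₃⁻(S_u)} is contained in the local spectrum σ_{S_u}(x). -/

import Mathlib

open Filter Topology ENNReal

noncomputable section

/-- The local resolvent set of `T` at `x`. -/
def localResolventSet {E : Type*} [NormedAddCommGroup E] [NormedSpace ℂ E]
    (T : E →L[ℂ] E) (x : E) : Set ℂ :=
  {l : ℂ | ∃ U : Set ℂ, IsOpen U ∧ l ∈ U ∧ ∃ f : ℂ → E, AnalyticOnNhd ℂ f U ∧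
    ∀ m ∈ U, T (f m) - m • f m = x}

/-- The local spectrum of `T` at `x`. -/
def localSpectrum {E : Type*} [NormedAddCommGroup E] [NormedSpace ℂ E]
    (T : E →L[ℂ] E) (x : E) : Set ℂ :=
  (localResolventSet T x)ᶜ

/-- The local spectral radius of `T` at `x`: `limsup ‖Tⁿx‖^{1/n}`. -/
def localSpecRad {E : Type*} [NormedAddCommGroup E] [NormedSpace ℂ E]
    (T : E →L[ℂ] E) (x : E) : ℝ≥0∞ :=
  limsup (fun n : ℕ => (‖(T ^ n) x‖₊ : ℝ≥0∞) ^ (1 / n : ℝ)) atTop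

/-- The lower bound `m(T) = inf {‖Tx‖ : ‖x‖ = 1}` of an operator. -/
def lowerBound {E : Type*} [NormedAddCommGroup E] [NormedSpace ℂ E]
    (T : E →L[ℂ] E) : ℝ :=
  sInf ((fun x => ‖T x‖) '' {x : E | ‖x‖ = 1})

/-- `r₁(T) = lim m(Tⁿ)^{1/n} = sup_{n ≥ 1} m(Tⁿ)^{1/n}`. -/
def r1 {E : Type*} [NormedAddCommGroup E] [NormedSpace ℂ E]
    (T : E →L[ℂ] E) : ℝ≥0∞ :=
  ⨆ n : ℕ, ENNReal.ofReal (lowerBound (T ^ (n + 1))) ^ (1 / (n + 1) : ℝ)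

/-- The point spectrum: the set of eigenvalues. -/
def pointSpectrum {E : Type*} [NormedAddCommGroup E] [NormedSpace ℂ E]
    (T : E →L[ℂ] E) : Set ℂ :=
  {l : ℂ | ∃ x : E, x ≠ 0 ∧ T x = l • x}

/-- The set of points where `T` fails the single-valued extension property. -/
def svepFails {E : Type*} [NormedAddCommGroup E] [NormedSpace ℂ E]
    (T : E →L[ℂ] E) : Set ℂ :=
  {l₀ : ℂ | ¬ ∀ r : ℝ, 0 < r → ∀ f : ℂ → E, AnalyticOnNhd ℂ f (Metric.ball l₀ r) →
      (∀ m ∈ Metric.ball l₀ r, T (f m) - m • f m = 0) →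
      ∀ m ∈ Metric.ball l₀ r, f m = 0}

/-- Dunford's condition (C). -/
def DunfordC {E : Type*} [NormedAddCommGroup E] [NormedSpace ℂ E]
    (T : E →L[ℂ] E) : Prop :=
  ∀ F : Set ℂ, IsClosed F → IsClosed {y : E | localSpectrum T y ⊆ F}

/-- Bishop's property (β). -/
def BishopBeta {E : Type*} [NormedAddCommGroup E] [NormedSpace ℂ E]
    (T : E →L[ℂ] E) : Prop :=
  ∀ U : Set ℂ, IsOpen U → ∀ f : ℕ → ℂ → E,
    (∀ m, AnalyticOnNhd ℂ (f m) U) →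
    TendstoLocallyUniformlyOn (fun m z => T (f m z) - z • f m z) 0 atTop U →
    TendstoLocallyUniformlyOn f 0 atTop U

section Shift

variable {H : Type*} [NormedAddCommGroup H] [InnerProductSpace ℂ H] [CompleteSpace H]

/-- `wB A n = B_n = A_{n-1} ⋯ A_1 A_0`, with `B_0 = 1`. -/
def wB (A : ℕ → (H →L[ℂ] H)ˣ) : ℕ → (H →L[ℂ] H)ˣ
  | 0 => 1
  | n + 1 => A n * wB A n

/-- `wBi A n = B_n⁻¹` as an operator. -/
def wBi (A : ℕ → (H →L[ℂ] H)ˣ) (n : ℕ) : H →L[ℂ] H :=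
  (((wB A n)⁻¹ : (H →L[ℂ] H)ˣ) : H →L[ℂ] H)

/-- `R₂⁺(S_u) = sup_{x ≠ 0} 1 / limsup ‖(B_n*)⁻¹ x‖^{1/n}` (with `1/0 = ∞`). -/
def R2plus (A : ℕ → (H →L[ℂ] H)ˣ) : ℝ≥0∞ :=
  ⨆ (x : H) (_ : x ≠ 0),
    (limsup (fun n : ℕ =>
      (‖ContinuousLinearMap.adjoint (wBi A n) x‖₊ : ℝ≥0∞) ^ (1 / n : ℝ)) atTop)⁻¹

/-- `R₂⁻(S_u) = inf_{x ≠ 0} 1 / limsup ‖(B_n*)⁻¹ x‖^{1/n}` (with `1/0 = ∞`). -/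
def R2minus (A : ℕ → (H →L[ℂ] H)ˣ) : ℝ≥0∞ :=
  ⨅ (x : H) (_ : x ≠ 0),
    (limsup (fun n : ℕ =>
      (‖ContinuousLinearMap.adjoint (wBi A n) x‖₊ : ℝ≥0∞) ^ (1 / n : ℝ)) atTop)⁻¹

/-- `R₃⁺(S_u) = sup_{x ≠ 0} limsup ‖B_n x‖^{1/n}`. -/
def R3plus (A : ℕ → (H →L[ℂ] H)ˣ) : ℝ≥0∞ :=
  ⨆ (x : H) (_ : x ≠ 0),
    limsup (fun n : ℕ => (‖(wB A n : H →L[ℂ] H) x‖₊ : ℝ≥0∞) ^ (1 / n : ℝ)) atTop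

/-- `R₃⁻(S_u) = inf_{x ≠ 0} limsup ‖B_n x‖^{1/n}`. -/
def R3minus (A : ℕ → (H →L[ℂ] H)ˣ) : ℝ≥0∞ :=
  ⨅ (x : H) (_ : x ≠ 0),
    limsup (fun n : ℕ => (‖(wB A n : H →L[ℂ] H) x‖₊ : ℝ≥0∞) ^ (1 / n : ℝ)) atTop

/-- `r₂(S_u) = 1 / limsup ‖B_n⁻¹‖^{1/n}` (with `1/0 = ∞`). -/
def r2 (A : ℕ → (H →L[ℂ] H)ˣ) : ℝ≥0∞ :=
  (limsup (fun n : ℕ => (‖wBi A n‖₊ : ℝ≥0∞) ^ (1 / n : ℝ)) atTop)⁻¹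

/-- `r₃(S_u) = 1 / liminf ‖B_n⁻¹‖^{1/n}` (with `1/0 = ∞`). -/
def r3 (A : ℕ → (H →L[ℂ] H)ˣ) : ℝ≥0∞ :=
  (liminf (fun n : ℕ => (‖wBi A n‖₊ : ℝ≥0∞) ^ (1 / n : ℝ)) atTop)⁻¹

/-- `R_𝒜(x) = 1 / limsup ‖B_n⁻¹ x_n‖^{1/n}` (with `1/0 = ∞`). -/
def RA (A : ℕ → (H →L[ℂ] H)ˣ) (x : lp (fun _ : ℕ => H) 2) : ℝ≥0∞ :=
  (limsup (fun n : ℕ => (‖wBi A n (x n)‖₊ : ℝ≥0∞) ^ (1 / n : ℝ)) atTop)⁻¹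

end Shift

/-!
Write `B n = A (n - 1) ⋯ A 0` and `P m = ∑ mᵏ • (B k)⁻¹ (x k)`, a polynomial with vector
coefficients. If `S z - m • z = x`, then `B n (P m) = -mⁿ⁺¹ • z n` for all large `n`; as the
coordinates of `z` are bounded, the growth rate of `n ↦ B n (P m)` is at most `‖m‖`. Hence for `‖m‖`
below the least growth rate the equation is solvable only if `P m = 0`, which happens at finitely
many `m`, because `P ≠ 0`. So the open disc lies in the local spectrum, and since the local spectrum
is closed, so does the closed disc when its radius is positive. The remaining point `0` (the case of
radius zero) is in the local spectrum because otherwise `x` would lie in the range of every power of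
`S`, and the first `n` coordinates of `S ^ n z` vanish.
-/

lemma tendsto_nnreal_rpow_one_div_natCast {C : NNReal} (hC : C ≠ 0) :
    Tendsto (fun n : ℕ => C ^ (1 / n : ℝ)) atTop (𝓝 1) := by
  simpa using tendsto_const_nhds.nnrpow tendsto_one_div_atTop_nhds_zero_nat (Or.inl hC)

lemma limsup_rpow_one_div_le_of_eventually_le_mul_pow {a : ℕ → ℝ≥0∞} {C r : NNReal}
    (h : ∀ᶠ n in atTop, a n ≤ C * (r : ℝ≥0∞) ^ n) :
    limsup (fun n : ℕ => a n ^ (1 / n : ℝ)) atTop ≤ r := by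
  -- `C + 1` because `0 ^ (1 / n)` does not tend to `1`.
  have hC : C + 1 ≠ 0 := by positivity
  have h_root : Tendsto (fun n : ℕ => (((C + 1) ^ (1 / n : ℝ) * r : NNReal) : ℝ≥0∞)) atTop
      (𝓝 r) := by
    simpa using ENNReal.tendsto_coe.2 ((tendsto_nnreal_rpow_one_div_natCast hC).mul_const r)
  rw [← h_root.limsup_eq]
  refine limsup_le_limsup ?_
  filter_upwards [h, eventually_ne_atTop 0] with n hn hn0
  calc a n ^ (1 / n : ℝ)
      ≤ (((C + 1 : NNReal) : ℝ≥0∞) * (r : ℝ≥0∞) ^ n) ^ (1 / n : ℝ) := by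
        gcongr
        exact hn.trans (by gcongr; exact le_self_add)
    _ = (((C + 1) ^ (1 / n : ℝ) * r : NNReal) : ℝ≥0∞) := by
        rw [ENNReal.mul_rpow_of_nonneg _ _ (by positivity), one_div,
          ENNReal.pow_rpow_inv_natCast hn0, ENNReal.coe_mul, ENNReal.coe_rpow_of_ne_zero hC]

lemma eq_zero_of_infinite_sum_pow_smul_eq_zero {K V : Type*} [Field K] [AddCommGroup V]
    [Module K V] {N : ℕ} {v : ℕ → V}
    (h : {m : K | ∑ k ∈ Finset.range N, m ^ k • v k = 0}.Infinite) {j : ℕ} (hj : j < N) :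
    v j = 0 := by
  rw [← Module.forall_dual_apply_eq_zero_iff K]
  intro φ
  let q : Polynomial K := ∑ k ∈ Finset.range N, Polynomial.monomial k (φ (v k))
  have q_eq_zero : q = 0 := by
    refine q.eq_zero_of_infinite_isRoot (h.mono fun m hm => ?_)
    have hφ : φ (∑ k ∈ Finset.range N, m ^ k • v k) = 0 := by rw [hm, map_zero]
    simpa [q, Polynomial.IsRoot, Polynomial.eval_finsetSum, mul_comm] using hφ
  have coeff_q : q.coeff j = φ (v j) := by
    simp [q, Polynomial.finsetSum_coeff, Polynomial.coeff_monomial, hj]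
  rw [← coeff_q, q_eq_zero, Polynomial.coeff_zero]

lemma analyticOnNhd_dslope {𝕜 E : Type*} [NontriviallyNormedField 𝕜] [NormedAddCommGroup E]
    [NormedSpace 𝕜 E] {f : 𝕜 → E} {U : Set 𝕜} (hf : AnalyticOnNhd 𝕜 f U) {a : 𝕜} (ha : a ∈ U) :
    AnalyticOnNhd 𝕜 (dslope f a) U := by
  intro m hm
  rcases eq_or_ne m a with rfl | hne
  · obtain ⟨p, hp⟩ := hf m hm
    exact ⟨p.fslope, hp.has_fpower_series_dslope_fslope⟩
  · refine AnalyticAt.congr ?_ (dslope_eventuallyEq_slope_of_ne f hne).symm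
    exact ((analyticAt_id.sub analyticAt_const).inv (sub_ne_zero.2 hne)).smul
      ((hf m hm).sub analyticAt_const)

section LocalSpectrum

variable {E : Type*} [NormedAddCommGroup E] [NormedSpace ℂ E] {T : E →L[ℂ] E} {x : E} {l : ℂ}

lemma isOpen_localResolventSet (T : E →L[ℂ] E) (x : E) : IsOpen (localResolventSet T x) := by
  refine isOpen_iff_forall_mem_open.2 ?_
  rintro l ⟨U, hU, hlU, hf⟩
  exact ⟨U, fun m hm => ⟨U, hU, hm, hf⟩, hU, hlU⟩

lemma isClosed_localSpectrum (T : E →L[ℂ] E) (x : E) : IsClosed (localSpectrum T x) :=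
  (isOpen_localResolventSet T x).isClosed_compl

/-- The difference quotient at `l` of a local resolvent function `f` of `x` is one of `f l`. -/
lemma exists_mem_localResolventSet_sub_smul_eq (hl : l ∈ localResolventSet T x) :
    ∃ z, l ∈ localResolventSet T z ∧ T z - l • z = x := by
  obtain ⟨U, hU, hlU, f, hf, hfx⟩ := hl
  have hg : AnalyticOnNhd ℂ (dslope f l) U := analyticOnNhd_dslope hf hlU
  have h_ne : ∀ m ∈ U, m ≠ l → T (dslope f l m) - m • dslope f l m = f l := by
    intro m hm hne
    have hT : T (f m) - T (f l) = m • f m - l • f l := by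
      rw [sub_eq_sub_iff_sub_eq_sub, hfx m hm, hfx l hlU]
    refine smul_right_injective E (sub_ne_zero.2 hne) ?_
    calc (m - l) • (T (dslope f l m) - m • dslope f l m)
        = T ((m - l) • dslope f l m) - m • (m - l) • dslope f l m := by
          rw [smul_sub, map_smul, smul_comm m]
      _ = (m - l) • f l := by
          rw [sub_smul_dslope, map_sub, hT]
          module
  have h_same : T (dslope f l l) - l • dslope f l l = f l := by
    have hcont : ContinuousAt (dslope f l) l := (hg l hlU).continuousAt
    refine ((ContinuousAt.eventuallyEq_nhds_iff_eventuallyEq_nhdsNE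
      (f := fun m => T (dslope f l m) - m • dslope f l m) (g := fun _ => f l)
      (by fun_prop) continuousAt_const).1 ?_).eq_of_nhds
    filter_upwards [self_mem_nhdsWithin, nhdsWithin_le_nhds (hU.mem_nhds hlU)] with m hne hm
    exact h_ne m hm hne
  refine ⟨f l, ⟨U, hU, hlU, dslope f l, hg, fun m hm => ?_⟩, hfx l hlU⟩
  rcases eq_or_ne m l with rfl | hne
  exacts [h_same, h_ne m hm hne]

lemma exists_pow_apply_eq_of_zero_mem_localResolventSet (h : 0 ∈ localResolventSet T x) (n : ℕ) :
    ∃ z, (T ^ n) z = x := by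
  induction n generalizing x with
  | zero => exact ⟨x, rfl⟩
  | succ n ih =>
    obtain ⟨y, hy, rfl⟩ := exists_mem_localResolventSet_sub_smul_eq h
    obtain ⟨z, rfl⟩ := ih hy
    exact ⟨z, by rw [pow_succ', mul_apply_eq_comp, zero_smul, sub_zero]⟩

end LocalSpectrum

section WeightedShift

variable {X : Type*} [NormedAddCommGroup X] [NormedSpace ℂ X] {p : ℝ≥0∞} [Fact (1 ≤ p)]

/-- `S` is the unilateral operator weighted shift on `ℓᵖ(ℕ, X)` with weights `A`, that is,
`S (x₀, x₁, …) = (0, A₀ x₀, A₁ x₁, …)`. -/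
structure IsWeightedShift (A : ℕ → X →L[ℂ] X)
    (S : lp (fun _ : ℕ => X) p →L[ℂ] lp (fun _ : ℕ => X) p) : Prop where
  apply_zero : ∀ x, S x 0 = 0
  apply_succ : ∀ x n, S x (n + 1) = A n (x n)

/-- The least exponential growth rate `inf_{v ≠ 0} limsup ‖B n v‖^{1/n}` of the orbits of a sequence
of operators; it specializes to `R3minus A` for `B = wB A`. -/
def minGrowthRate (B : ℕ → X →L[ℂ] X) : ℝ≥0∞ :=
  ⨅ (v : X) (_ : v ≠ 0), limsup (fun n : ℕ => (‖B n v‖₊ : ℝ≥0∞) ^ (1 / n : ℝ)) atTop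

lemma minGrowthRate_le (B : ℕ → X →L[ℂ] X) {v : X} (hv : v ≠ 0) :
    minGrowthRate B ≤ limsup (fun n : ℕ => (‖B n v‖₊ : ℝ≥0∞) ^ (1 / n : ℝ)) atTop :=
  iInf₂_le v hv

/-- The partial sum `∑_{k < N} mᵏ (B k)⁻¹ (x k)` of the entries of `x` pulled back to `X` along the
products of weights `B`; for finitely supported `x` it is a polynomial in `m` with vector
coefficients. -/
def pullbackSum (B : ℕ → (X →L[ℂ] X)ˣ) (x : ℕ → X) (N : ℕ) (m : ℂ) : X :=
  ∑ k ∈ Finset.range N, m ^ k • (↑(B k)⁻¹ : X →L[ℂ] X) (x k)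

lemma apply_units_inv_apply (U : (X →L[ℂ] X)ˣ) (v : X) :
    (U : X →L[ℂ] X) ((↑U⁻¹ : X →L[ℂ] X) v) = v :=
  DFunLike.congr_fun U.mul_inv v

lemma pullbackSum_of_le {B : ℕ → (X →L[ℂ] X)ˣ} {x : ℕ → X} {N n : ℕ}
    (hN : ∀ k, N ≤ k → x k = 0) (hn : N ≤ n) (m : ℂ) :
    pullbackSum B x n m = pullbackSum B x N m := by
  refine (Finset.sum_subset (Finset.range_mono hn) fun k _ hk => ?_).symm
  rw [hN k (by simpa using hk), map_zero, smul_zero]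

lemma eq_zero_of_infinite_pullbackSum_eq_zero {B : ℕ → (X →L[ℂ] X)ˣ} {x : ℕ → X} {N : ℕ}
    (h : {m : ℂ | pullbackSum B x N m = 0}.Infinite) {k : ℕ} (hk : k < N) : x k = 0 := by
  rw [← apply_units_inv_apply (B k) (x k), eq_zero_of_infinite_sum_pow_smul_eq_zero h hk, map_zero]

namespace IsWeightedShift

variable {A : ℕ → X →L[ℂ] X} {B : ℕ → (X →L[ℂ] X)ˣ}
  {S : lp (fun _ : ℕ => X) p →L[ℂ] lp (fun _ : ℕ => X) p} {x z : lp (fun _ : ℕ => X) p}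
  {m : ℂ} {N : ℕ}

lemma pow_apply_eq_zero_of_lt (hS : IsWeightedShift A S) (z : lp (fun _ : ℕ => X) p)
    {n k : ℕ} (hk : k < n) : (S ^ n) z k = 0 := by
  induction n generalizing k with
  | zero => exact absurd hk k.not_lt_zero
  | succ n ih =>
    rw [pow_succ', mul_apply_eq_comp]
    cases k with
    | zero => exact hS.apply_zero _
    | succ k => rw [hS.apply_succ, ih (Nat.lt_of_succ_lt_succ hk), map_zero]

lemma zero_mem_localSpectrum (hS : IsWeightedShift A S) (hx : x ≠ 0) :
    0 ∈ localSpectrum S x := by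
  refine fun h => hx (lp.ext (funext fun k => ?_))
  obtain ⟨z, rfl⟩ := exists_pow_apply_eq_of_zero_mem_localResolventSet h (k + 1)
  exact hS.pow_apply_eq_zero_of_lt z k.lt_succ_self

lemma apply_pullbackSum_succ (hS : IsWeightedShift A S)
    (hB : ∀ n, (B (n + 1) : X →L[ℂ] X) = A n * B n) (hz : S z - m • z = x) (n : ℕ) :
    (B n : X →L[ℂ] X) (pullbackSum B x (n + 1) m) = -(m ^ (n + 1) • z n) := by
  have hxk (k : ℕ) : x k = S z k - m • z k := by rw [← hz]; rfl
  induction n with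
  | zero => simp [pullbackSum, apply_units_inv_apply, hxk, hS.apply_zero]
  | succ n ih =>
    rw [pullbackSum, Finset.sum_range_succ, ← pullbackSum, map_add, map_smul,
      apply_units_inv_apply, hB, mul_apply_eq_comp, ih, hxk, hS.apply_succ, map_neg, map_smul]
    module

lemma pullbackSum_eq_zero_of_lt_minGrowthRate (hS : IsWeightedShift A S)
    (hB : ∀ n, (B (n + 1) : X →L[ℂ] X) = A n * B n) (hz : S z - m • z = x)
    (hN : ∀ k, N ≤ k → x k = 0) (hm : (‖m‖₊ : ℝ≥0∞) < minGrowthRate fun n => (B n : X →L[ℂ] X)) :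
    pullbackSum B x N m = 0 := by
  by_contra hP
  refine hm.not_ge ((minGrowthRate_le _ hP).trans ?_)
  refine limsup_rpow_one_div_le_of_eventually_le_mul_pow (C := ‖m‖₊ * ‖z‖₊) ?_
  filter_upwards [eventually_ge_atTop N] with n hn
  have hzn : ‖z n‖₊ ≤ ‖z‖₊ :=
    lp.norm_apply_le_norm (zero_lt_one.trans_le Fact.out).ne' z n
  rw [← pullbackSum_of_le hN (Nat.le_succ_of_le hn), hS.apply_pullbackSum_succ hB hz, nnnorm_neg,
    nnnorm_smul, nnnorm_pow]
  norm_cast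
  calc ‖m‖₊ ^ (n + 1) * ‖z n‖₊ ≤ ‖m‖₊ ^ (n + 1) * ‖z‖₊ := by gcongr
    _ = ‖m‖₊ * ‖z‖₊ * ‖m‖₊ ^ n := by ring

lemma mem_localSpectrum_of_lt_minGrowthRate (hS : IsWeightedShift A S)
    (hB : ∀ n, (B (n + 1) : X →L[ℂ] X) = A n * B n) (hx : x ≠ 0) (hN : ∀ k, N ≤ k → x k = 0)
    (hm : (‖m‖₊ : ℝ≥0∞) < minGrowthRate fun n => (B n : X →L[ℂ] X)) :
    m ∈ localSpectrum S x := by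
  intro h
  have h_nhds : ∀ᶠ w in 𝓝 m, w ∈ localResolventSet S x ∧
      (‖w‖₊ : ℝ≥0∞) < minGrowthRate fun n => (B n : X →L[ℂ] X) :=
    ((isOpen_localResolventSet S x).eventually_mem h).and
      (continuous_enorm.continuousAt.eventually_lt_const hm)
  have h_inf : {w : ℂ | pullbackSum B x N w = 0}.Infinite := by
    refine (infinite_of_mem_nhds m h_nhds).mono ?_
    rintro w ⟨hw, hw_lt⟩
    obtain ⟨z, -, hz⟩ := exists_mem_localResolventSet_sub_smul_eq hw
    exact hS.pullbackSum_eq_zero_of_lt_minGrowthRate hB hz hN hw_lt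
  refine hx (lp.ext (funext fun k => ?_))
  rcases lt_or_ge k N with hk | hk
  · exact eq_zero_of_infinite_pullbackSum_eq_zero h_inf hk
  · exact hN k hk

end IsWeightedShift

theorem stmt14_general {A : ℕ → X →L[ℂ] X} {B : ℕ → (X →L[ℂ] X)ˣ}
    (hB : ∀ n, (B (n + 1) : X →L[ℂ] X) = A n * B n)
    {S : lp (fun _ : ℕ => X) p →L[ℂ] lp (fun _ : ℕ => X) p} (hS : IsWeightedShift A S)
    {x : lp (fun _ : ℕ => X) p} (hx : x ≠ 0) (hfin : ∃ N : ℕ, ∀ k, N ≤ k → x k = 0) :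
    {l : ℂ | (‖l‖₊ : ℝ≥0∞) ≤ minGrowthRate fun n => (B n : X →L[ℂ] X)} ⊆ localSpectrum S x := by
  intro l hl
  obtain ⟨N, hN⟩ := hfin
  rcases eq_or_ne l 0 with rfl | hl0
  · exact hS.zero_mem_localSpectrum hx
  · have hl_closure : l ∈ closure (Metric.ball 0 ‖l‖) := by
      simp [closure_ball _ (norm_ne_zero_iff.2 hl0)]
    refine (isClosed_localSpectrum S x).closure_subset_iff.2 (fun m hm => ?_) hl_closure
    have hml : (‖m‖₊ : ℝ≥0∞) < ‖l‖₊ := by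
      exact_mod_cast mem_ball_zero_iff.1 hm
    exact hS.mem_localSpectrum_of_lt_minGrowthRate hB hx hN (hml.trans_le hl)

end WeightedShift

theorem stmt14 {H : Type*} [NormedAddCommGroup H] [InnerProductSpace ℂ H] [CompleteSpace H]
    (A : ℕ → (H →L[ℂ] H)ˣ)
    (hbdd : ∃ C : ℝ, ∀ n, ‖(A n : H →L[ℂ] H)‖ ≤ C)
    (S : lp (fun _ : ℕ => H) 2 →L[ℂ] lp (fun _ : ℕ => H) 2)
    (hS0 : ∀ x : lp (fun _ : ℕ => H) 2, S x 0 = 0)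
    (hS : ∀ (x : lp (fun _ : ℕ => H) 2) (n : ℕ), S x (n + 1) = (A n : H →L[ℂ] H) (x n))
    (x : lp (fun _ : ℕ => H) 2) (hx : x ≠ 0)
    (hfin : ∃ N : ℕ, ∀ k, N ≤ k → x k = 0) :
    {l : ℂ | (‖l‖₊ : ℝ≥0∞) ≤ R3minus A} ⊆ localSpectrum S x := by
  exact stmt14_general (fun _ => rfl) ⟨hS0, hS⟩ hx hfin
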